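/- Assume the partition-of-unity property Σ_{j ∈ ι} c i j + c∂ i = 0 for every i ∈ ι, that c i i = 0 for all i, that dv i j ≠ 0 for all j ≠ i, that d∂ i ≠ 0 for all i, and that u' satisfies the low-order scheme. Then for every i ∈ ι the update admits the convex reformulation u' i = (1 + 2*τ*(D i)/(m i)) • u i + (2*τ*(d∂ i)/(m i)) • ū∂ i + Σ_{j ≠ i} (2*τ*(dv i j)/(m i)) • ū i j, where the bar states are ū i j := (1/2) • (u j + u i) − (1/(2 * dv i j)) • ((f (u j) − f (u i))·(c i j)) and ū∂ i := (1/2) • (u∂ i + u i) − (1/(2 * d∂ i)) • ((f (u∂ i) − f (u i))·(c∂ i)), and the diagonal viscosity is D i := −(Σ_{j ≠ i} dv i j) − d∂ i. -/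

import Mathlib

open Finset

/-- Contraction of a flux value `G : Fin M → Fin d → ℝ` with a vector
`c : Fin d → ℝ`, yielding a state in `Fin M → ℝ`. -/
noncomputable def contr {M d : ℕ} (G : Fin M → Fin d → ℝ) (c : Fin d → ℝ) :
    Fin M → ℝ :=
  fun k => ∑ α, G k α * c α

theorem contr_sub_left {M d : ℕ} (G H : Fin M → Fin d → ℝ) (c : Fin d → ℝ) :
    contr (G - H) c = contr G c - contr H c := by
  ext k
  simp [contr, sub_mul]

theorem contr_zero_right {M d : ℕ} (G : Fin M → Fin d → ℝ) : contr G 0 = 0 := by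
  ext k
  simp [contr]

theorem contr_add_right {M d : ℕ} (G : Fin M → Fin d → ℝ) (b c : Fin d → ℝ) :
    contr G (b + c) = contr G b + contr G c := by
  ext k
  simp [contr, mul_add, Finset.sum_add_distrib]

theorem contr_sum_right {M d : ℕ} {ι : Type*} (s : Finset ι) (G : Fin M → Fin d → ℝ)
    (c : ι → Fin d → ℝ) : contr G (∑ j ∈ s, c j) = ∑ j ∈ s, contr G (c j) := by
  ext k
  simp only [contr, Finset.sum_apply, Finset.mul_sum]
  exact Finset.sum_comm

/-- A bar state scaled by its viscosity: the division by the viscosity cancels. -/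
theorem smul_barState {E : Type*} [AddCommGroup E] [Module ℝ E] {ν : ℝ} (hν : ν ≠ 0)
    (τ μ : ℝ) (v w g : E) :
    (2 * τ * ν / μ) • ((1 / 2 : ℝ) • (v + w) - (1 / (2 * ν)) • g) =
      (τ / μ) • (ν • (v - w) - g) + (2 * τ / μ * ν) • w := by
  have h : 2 * τ * ν / μ * (1 / (2 * ν)) = τ / μ := by field_simp
  rw [smul_sub, smul_smul _ _ g, h]
  module

/-- `cB`, `dB`, `uB` play the roles of the boundary data `c∂`, `d∂`, `u∂`;
`ubar` and `ubarB` are the bar states, and `D` the diagonal viscosity. -/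
theorem lowOrder_convex_reformulation
    {d M : ℕ} (hd : 1 ≤ d) (hM : 1 ≤ M)
    {ι : Type*} [Fintype ι] [DecidableEq ι]
    (m : ι → ℝ) (hm : ∀ i, 0 < m i)
    (τ : ℝ) (hτ : 0 < τ)
    (c : ι → ι → (Fin d → ℝ)) (dv : ι → ι → ℝ)
    (cB : ι → (Fin d → ℝ)) (dB : ι → ℝ)
    (f : (Fin M → ℝ) → (Fin M → Fin d → ℝ))
    (u : ι → (Fin M → ℝ)) (uB : ι → (Fin M → ℝ)) (u' : ι → (Fin M → ℝ))
    (hpart : ∀ i, ∑ j, c i j + cB i = 0)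
    (hcii : ∀ i, c i i = 0)
    (hdv : ∀ i j, j ≠ i → dv i j ≠ 0)
    (hdB : ∀ i, dB i ≠ 0)
    (hscheme : ∀ i,
      m i • (u' i - u i) +
        τ • ((∑ j, (contr (f (u j)) (c i j) - dv i j • (u j - u i))) +
          contr (f (uB i)) (cB i) - dB i • (uB i - u i)) = 0)
    (ubar : ι → ι → (Fin M → ℝ))
    (hubar : ∀ i j, ubar i j =
      (1 / 2 : ℝ) • (u j + u i) -
        (1 / (2 * dv i j)) • contr (f (u j) - f (u i)) (c i j))
    (ubarB : ι → (Fin M → ℝ))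
    (hubarB : ∀ i, ubarB i =
      (1 / 2 : ℝ) • (uB i + u i) -
        (1 / (2 * dB i)) • contr (f (uB i) - f (u i)) (cB i))
    (D : ι → ℝ)
    (hD : ∀ i, D i = -(∑ j ∈ Finset.univ.erase i, dv i j) - dB i) :
    ∀ i, u' i =
      (1 + 2 * τ * D i / m i) • u i +
      (2 * τ * dB i / m i) • ubarB i +
      ∑ j ∈ Finset.univ.erase i, (2 * τ * dv i j / m i) • ubar i j := by
  intro i
  have hm' : m i ≠ 0 := (hm i).ne'
  have hflux : ∑ j ∈ Finset.univ.erase i, contr (f (u i)) (c i j) + contr (f (u i)) (cB i) = 0 := by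
    rw [← contr_sum_right, ← contr_add_right, Finset.sum_erase _ (hcii i), hpart, contr_zero_right]
  have hoff : ∑ j, (contr (f (u j)) (c i j) - dv i j • (u j - u i)) =
      ∑ j ∈ Finset.univ.erase i, (contr (f (u j)) (c i j) - dv i j • (u j - u i)) := by
    refine (Finset.sum_erase _ ?_).symm
    simp [hcii, contr_zero_right]
  have hupdate : u' i = u i - (τ / m i) •
      ((∑ j, (contr (f (u j)) (c i j) - dv i j • (u j - u i))) +
        contr (f (uB i)) (cB i) - dB i • (uB i - u i)) := by
    have h := congrArg (fun v => (m i)⁻¹ • v) (hscheme i)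
    simp only [smul_add, smul_zero, inv_smul_smul₀ hm', smul_smul _ τ] at h
    rw [div_eq_inv_mul, ← sub_eq_zero, ← h]
    module
  have hbar : ∑ j ∈ Finset.univ.erase i, (2 * τ * dv i j / m i) • ubar i j =
      ∑ j ∈ Finset.univ.erase i, ((τ / m i) • (dv i j • (u j - u i) -
        (contr (f (u j)) (c i j) - contr (f (u i)) (c i j))) +
        (2 * τ / m i * dv i j) • u i) := by
    refine Finset.sum_congr rfl fun j hj => ?_
    rw [hubar, smul_barState (hdv i j (Finset.ne_of_mem_erase hj)), contr_sub_left]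
  rw [hupdate, hoff, hbar, hubarB, smul_barState (hdB i), hD, contr_sub_left,
    eq_neg_of_add_eq_zero_right hflux]
  simp only [Finset.sum_add_distrib, Finset.sum_sub_distrib, ← Finset.smul_sum,
    ← Finset.sum_smul, ← Finset.mul_sum]
  module
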